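/- Let d ≥ 3 be a prime, ω = exp(2πi/d), ε_d = 1 if d ≡ 1 (mod 4) and ε_d = i if d ≡ 3 (mod 4), and set λ_1 = ε_d^{−1} exp(πi(d²−1)/(6d)). Define B_k = ω^{k(k+1)} X Z^k for k ∈ {0,…,d−1} and C_j = (λ_1/√d) ∑_{k=0}^{d−1} ω^{jk} B_k for j ∈ {0,…,d−1}. Then each C_j is unitary and satisfies C_j^d = 𝟙 (so its eigenvalues are d-th roots of unity). -/

import Mathlib

/-!
Write `d = 2n+1`. Column `m` of `C_j` has a single nonzero entry, in row `m+1`, namely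
`c_m = (λ₁/√d) ∑_k ω^(k² + (1+j+m)k)`. So `C_j` is a weighted cyclic shift: it is unitary as soon as
every `|c_m| = 1`, and `C_j^d` is `∏ c_m` times the identity.

Completing the square modulo `d` (`sum_complete_square`) reduces each `c_m` to the quadratic Gauss
sum `∑_k ω^(k(k+1))`. Its sign matters, because `d` is odd; `gauss_sum_eval` finds the exact value
by Gauss's own method. The alternating sum of Gaussian binomials `∑ (-1)^k [2n, k]_q` equals
`∏_{i<n} (1 - q^(2i+1))` (`qbin_alternating_sum`); at `q = ω⁻²` its `k`-th term is `ω^(k(k+1))`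
(`qbin_root_of_unity`). The Gauss sum is thereby, up to explicit phases, a product of
`2 sin(2π(2i+1)/d)`, whose square is `d` and whose sign is found by counting negative factors.

With this value `c_m = E · (root of unity)`, `E = exp(πi(d²-1)/(6d))`, which gives unitarity, and
`∏ c_m = 1` becomes a congruence for a sum of squares (`phase_product`). Only the oddness of `d`
is needed for any of this.
-/


open Matrix

noncomputable section

/-- `ε_d = 1` if `d ≡ 1 (mod 4)` and `ε_d = i` if `d ≡ 3 (mod 4)`. -/
def epsd (d : ℕ) : ℂ := if d % 4 = 1 then 1 else Complex.I

/-- The `d`-dimensional Heisenberg-Weyl shift matrix `X`, `X e_j = e_{j+1 mod d}`. -/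
def Xmat (d : ℕ) : Matrix (Fin d) (Fin d) ℂ :=
  Matrix.of fun i j => if (i : ℕ) = ((j : ℕ) + 1) % d then 1 else 0

/-- The `d`-dimensional Heisenberg-Weyl clock matrix `Z`, `Z e_j = ω^j e_j`. -/
def Zmat (d : ℕ) (ω : ℂ) : Matrix (Fin d) (Fin d) ℂ :=
  Matrix.diagonal fun j => ω ^ (j : ℕ)

/-! ### Gaussian binomial coefficients -/

/-- The Gaussian binomial coefficient `[n, k]_q`, defined for every element `q` of a commutative
ring by the Pascal rule `[n+1, k+1] = q^(k+1) [n, k+1] + [n, k]`. -/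
def qbin {R : Type*} [CommRing R] (q : R) : ℕ → ℕ → R
  | _, 0 => 1
  | 0, _ + 1 => 0
  | n + 1, k + 1 => q ^ (k + 1) * qbin q n (k + 1) + qbin q n k

section QBinomial

variable {R : Type*} [CommRing R] (q : R)

lemma qbin_zero (n : ℕ) : qbin q n 0 = 1 := by cases n <;> rfl

lemma qbin_zero_succ (k : ℕ) : qbin q 0 (k + 1) = 0 := rfl

lemma qbin_succ (n k : ℕ) :
    qbin q (n + 1) (k + 1) = q ^ (k + 1) * qbin q n (k + 1) + qbin q n k := rfl

lemma qbin_eq_zero (n : ℕ) : ∀ k, n < k → qbin q n k = 0 := by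
  induction n with
  | zero =>
    rintro (_ | k) hk
    · omega
    · rfl
  | succ n ih =>
    rintro (_ | k) hk
    · omega
    · rw [qbin_succ, ih _ (by omega), ih _ (by omega)]; ring

/-- Absorption `(1 - q^(k+1)) [n+1, k+1] = (1 - q^(n+1)) [n, k]`. The induction on `n` passes through
the complementary rule `(q^k - q^(n+1)) [n+1, k] = q^k (1 - q^(n+1)) [n, k]`. -/
lemma qbin_absorb (n : ℕ) :
    ∀ k, (1 - q ^ (k + 1)) * qbin q (n + 1) (k + 1) = (1 - q ^ (n + 1)) * qbin q n k := by
  induction n with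
  | zero =>
    rintro (_ | k)
    · rw [qbin_succ, qbin_zero_succ, qbin_zero]; ring
    · rw [qbin_succ, qbin_zero_succ, qbin_zero_succ]; ring
  | succ n ih =>
    have compl : ∀ k, (q ^ k - q ^ (n + 1)) * qbin q (n + 1) k
        = q ^ k * (1 - q ^ (n + 1)) * qbin q n k := by
      rintro (_ | k)
      · rw [qbin_zero, qbin_zero]; ring
      · linear_combination (1 - q ^ (n + 1)) * qbin_succ q n k - ih k
    intro k
    rw [qbin_succ q (n + 1) k]
    linear_combination q ^ (k + 1) * ih k - q * compl k

/-- Gauss's alternating sum of Gaussian binomials: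
`∑ (-1)^k [2m, k] = (1 - q) (1 - q^3) ⋯ (1 - q^(2m-1))`. -/
lemma qbin_alternating_sum (m : ℕ) :
    ∑ k ∈ Finset.range (2 * m + 1), (-1) ^ k * qbin q (2 * m) k
      = ∏ i ∈ Finset.range m, (1 - q ^ (2 * i + 1)) := by
  -- Two-step recursion `H (n+2) = (1 - q^(n+1)) H n` for the alternating sums `H n`.
  have step : ∀ n, ∑ k ∈ Finset.range (n + 3), (-1) ^ k * qbin q (n + 2) k
      = (1 - q ^ (n + 1)) * ∑ k ∈ Finset.range (n + 1), (-1) ^ k * qbin q n k := by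
    intro n
    have e1 : ∑ k ∈ Finset.range (n + 3), (-1) ^ k * qbin q (n + 2) k
        = ∑ k ∈ Finset.range (n + 2), ((-1) ^ (k + 1) * (q ^ (k + 1) * qbin q (n + 1) (k + 1)))
          + 1 + ∑ k ∈ Finset.range (n + 2), (-1) ^ (k + 1) * qbin q (n + 1) k := by
      rw [Finset.sum_range_succ', qbin_zero, add_right_comm, ← Finset.sum_add_distrib]
      congr 1
      · refine Finset.sum_congr rfl fun k _ => ?_
        rw [qbin_succ]; ring
      · simp
    have e2 : ∑ k ∈ Finset.range (n + 2), (-1) ^ (k + 1) * qbin q (n + 1) k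
        = ∑ k ∈ Finset.range (n + 1), (-1) ^ k * qbin q (n + 1) (k + 1) - 1 := by
      rw [Finset.sum_range_succ', qbin_zero, sub_eq_add_neg]
      congr 1
      · refine Finset.sum_congr rfl fun k _ => ?_
        ring
      · simp
    rw [e1, e2, Finset.sum_range_succ, qbin_eq_zero q (n + 1) (n + 1 + 1) (by omega),
      Finset.mul_sum]
    have e3 : ∑ k ∈ Finset.range (n + 1), (1 - q ^ (n + 1)) * ((-1) ^ k * qbin q n k)
        = ∑ k ∈ Finset.range (n + 1), ((-1) ^ (k + 1) * (q ^ (k + 1) * qbin q (n + 1) (k + 1)))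
          + ∑ k ∈ Finset.range (n + 1), (-1) ^ k * qbin q (n + 1) (k + 1) := by
      rw [← Finset.sum_add_distrib]
      refine Finset.sum_congr rfl fun k _ => ?_
      linear_combination -(-1) ^ k * qbin_absorb q n k
    rw [e3]; ring
  induction m with
  | zero => simp [qbin_zero]
  | succ m ih =>
    rw [Finset.prod_range_succ, ← ih, mul_comm _ (1 - _)]
    exact step (2 * m)

end QBinomial

/-! ### The quadratic Gauss sum -/

/-- At a primitive `d`-th root of unity `[d, k] = 0` for `0 < k < d`, so the Pascal rule gives
`q^(k+1) [d-1, k+1] = -[d-1, k]`; with `q = w⁻²` this solves to a power of `w`. -/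
lemma qbin_root_of_unity {w : ℂ} {n : ℕ} (hw : IsPrimitiveRoot ((w⁻¹) ^ 2) (2 * n + 1))
    (hw0 : w ≠ 0) :
    ∀ k < 2 * n + 1, (-1) ^ k * qbin ((w⁻¹) ^ 2) (2 * n) k = w ^ (k * (k + 1)) := by
  intro k
  induction k with
  | zero => intro _; simp [qbin_zero]
  | succ k ih =>
    intro hk
    have hne : 1 - ((w⁻¹) ^ 2) ^ (k + 1) ≠ 0 :=
      sub_ne_zero.2 (hw.pow_ne_one_of_pos_of_lt (by omega) hk).symm
    have h0 : qbin ((w⁻¹) ^ 2) (2 * n + 1) (k + 1) = 0 := by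
      have := qbin_absorb ((w⁻¹) ^ 2) (2 * n) k
      rw [hw.pow_eq_one, sub_self, zero_mul] at this
      exact (mul_eq_zero.1 this).resolve_left hne
    rw [qbin_succ] at h0
    have hinv : w ^ (2 * (k + 1)) * ((w⁻¹) ^ 2) ^ (k + 1) = 1 := by
      rw [← pow_mul, ← mul_pow, mul_inv_cancel₀ hw0, one_pow]
    have := ih (by omega)
    have e : w ^ ((k + 1) * (k + 1 + 1)) = w ^ (k * (k + 1)) * w ^ (2 * (k + 1)) := by
      rw [← pow_add]; congr 1; ring
    rw [e, ← this]
    linear_combination (-1) ^ (k + 1) * w ^ (2 * (k + 1)) * h0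
      - (-1) ^ (k + 1) * qbin ((w⁻¹) ^ 2) (2 * n) (k + 1) * hinv

/-- The product form of the quadratic Gauss sum `∑ w^(k(k+1))`. -/
lemma gauss_sum_eq_prod {w : ℂ} {n : ℕ} (hw : IsPrimitiveRoot ((w⁻¹) ^ 2) (2 * n + 1))
    (hw0 : w ≠ 0) :
    w ^ (n ^ 2) * ∑ k ∈ Finset.range (2 * n + 1), w ^ (k * (k + 1))
      = ∏ i ∈ Finset.range n, (w ^ (2 * i + 1) - (w⁻¹) ^ (2 * i + 1)) := by
  have h1 : ∑ k ∈ Finset.range (2 * n + 1), w ^ (k * (k + 1))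
      = ∏ i ∈ Finset.range n, (1 - ((w⁻¹) ^ 2) ^ (2 * i + 1)) := by
    rw [← qbin_alternating_sum]
    exact Finset.sum_congr rfl fun k hk =>
      (qbin_root_of_unity hw hw0 k (Finset.mem_range.1 hk)).symm
  have h2 : w ^ (n ^ 2) = ∏ i ∈ Finset.range n, w ^ (2 * i + 1) := by
    have hodd : ∀ m : ℕ, ∑ i ∈ Finset.range m, (2 * i + 1) = m ^ 2 := by
      intro m
      induction m with
      | zero => rfl
      | succ m ih => rw [Finset.sum_range_succ, ih]; ring
    rw [Finset.prod_pow_eq_pow_sum, hodd]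
  rw [h1, h2, ← Finset.prod_mul_distrib]
  refine Finset.prod_congr rfl fun i _ => ?_
  have : w ^ (2 * i + 1) * (w⁻¹) ^ (2 * i + 1) = 1 := by
    rw [← mul_pow, mul_inv_cancel₀ hw0, one_pow]
  rw [← pow_mul, mul_comm 2, pow_mul]
  linear_combination -(w⁻¹) ^ (2 * i + 1) * this

/-- The square of the product of sines: by reflection `r ↦ d - r` it is
`∏_{0 < r < d} (1 - q^r) = d`. -/
lemma prod_sq_eq {w : ℂ} {n : ℕ} (hw : IsPrimitiveRoot ((w⁻¹) ^ 2) (2 * n + 1))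
    (hw0 : w ≠ 0) :
    ∏ i ∈ Finset.range n, (-(w ^ (2 * i + 1) - (w⁻¹) ^ (2 * i + 1)) ^ 2) = 2 * n + 1 := by
  have h := hw.prod_one_sub_pow_eq_order
  have split : ∀ (f : ℕ → ℂ) (m : ℕ), ∏ k ∈ Finset.range (2 * m), f k
      = (∏ i ∈ Finset.range m, f (2 * i)) * ∏ i ∈ Finset.range m, f (2 * i + 1) := by
    intro f m
    induction m with
    | zero => simp
    | succ m ih =>
      rw [mul_add, mul_one, Finset.prod_range_succ, Finset.prod_range_succ, ih,
        Finset.prod_range_succ, Finset.prod_range_succ]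
      ring
  rw [split, ← Finset.prod_range_reflect (fun i => 1 - ((w⁻¹) ^ 2) ^ (2 * i + 1 + 1)),
    ← Finset.prod_mul_distrib] at h
  push_cast at h
  rw [← h]
  refine Finset.prod_congr rfl fun i hi => ?_
  have hi' := Finset.mem_range.1 hi
  have e : ((w⁻¹) ^ 2) ^ (2 * (n - 1 - i) + 1 + 1) = (w ^ (2 * i + 1)) ^ 2 := by
    have h1 : ((w⁻¹) ^ 2) ^ (2 * (n - 1 - i) + 1 + 1) * ((w⁻¹) ^ 2) ^ (2 * i + 1) = 1 := by
      rw [← pow_add, show 2 * (n - 1 - i) + 1 + 1 + (2 * i + 1) = 2 * n + 1 by omega,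
        hw.pow_eq_one]
    have h2 : (w ^ (2 * i + 1)) ^ 2 * ((w⁻¹) ^ 2) ^ (2 * i + 1) = 1 := by
      rw [← pow_mul, ← pow_mul, mul_comm 2 (2 * i + 1), ← mul_pow, mul_inv_cancel₀ hw0, one_pow]
    exact mul_right_cancel₀ (pow_ne_zero _ (pow_ne_zero _ (inv_ne_zero hw0))) (h1.trans h2.symm)
  have : w ^ (2 * i + 1) * (w⁻¹) ^ (2 * i + 1) = 1 := by
    rw [← mul_pow, mul_inv_cancel₀ hw0, one_pow]
  rw [e, ← pow_mul, mul_comm 2 (2 * i + 1), pow_mul]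
  linear_combination (1 - w ^ (2 * i + 1) * (w⁻¹) ^ (2 * i + 1)) * this

/-- The sign and modulus of the quadratic Gauss sum for odd `d = 2n+1`:
`w^(n²) ∑ w^(k(k+1)) = ∑ w^(k²)` is `√d` or `i√d` according to the class of `d` modulo 4. -/
lemma gauss_sum_eval {w : ℂ} {n : ℕ}
    (hw : w = Complex.exp (2 * Real.pi * Complex.I / (2 * n + 1 : ℕ))) :
    w ^ (n ^ 2) * ∑ k ∈ Finset.range (2 * n + 1), w ^ (k * (k + 1))
      = epsd (2 * n + 1) * (Real.sqrt (2 * n + 1 : ℕ) : ℂ) := by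
  have hw0 : w ≠ 0 := hw ▸ Complex.exp_ne_zero _
  have hprim : IsPrimitiveRoot ((w⁻¹) ^ 2) (2 * n + 1) := by
    refine IsPrimitiveRoot.pow_of_coprime ?_ 2 (by simp)
    rw [hw]
    exact (Complex.isPrimitiveRoot_exp _ (by omega)).inv
  set s : ℕ → ℝ := fun i => 2 * Real.sin (2 * Real.pi * (2 * i + 1) / (2 * n + 1)) with hs
  have hfac : ∀ i : ℕ, w ^ (2 * i + 1) - (w⁻¹) ^ (2 * i + 1) = Complex.I * (s i : ℂ) := by
    intro i
    rw [hs, hw, ← Complex.exp_neg, ← Complex.exp_nat_mul, ← Complex.exp_nat_mul]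
    push_cast
    rw [Complex.two_sin]
    have e1 : (2 * i + 1 : ℂ) * (2 * Real.pi * Complex.I / (2 * n + 1))
      = 2 * Real.pi * (2 * i + 1) / (2 * n + 1) * Complex.I := by ring
    have e2 : (2 * i + 1 : ℂ) * -(2 * Real.pi * Complex.I / (2 * n + 1))
      = -(2 * Real.pi * (2 * i + 1) / (2 * n + 1)) * Complex.I := by ring
    rw [e1, e2]
    linear_combination -(Complex.exp (-(2 * Real.pi * (2 * i + 1) / (2 * n + 1)) * Complex.I)
      - Complex.exp (2 * Real.pi * (2 * i + 1) / (2 * n + 1) * Complex.I)) * Complex.I_sq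
  have hsq : (∏ i ∈ Finset.range n, s i) ^ 2 = (2 * n + 1 : ℕ) := by
    have h := prod_sq_eq hprim hw0
    simp only [hfac, mul_pow, Complex.I_sq, neg_mul, one_mul, neg_neg] at h
    rw [← Finset.prod_pow]
    exact_mod_cast h
  have hd0 : (0 : ℝ) < 2 * n + 1 := by positivity
  -- The factor `s i` is positive exactly when `2 (2 i + 1) < d`, i.e. for `i < n - n / 2`.
  have hpos : ∀ i ∈ Finset.range (n - n / 2), 0 < s i := by
    intro i hi
    have hi' : 2 * (2 * i + 1) < 2 * n + 1 := by have := Finset.mem_range.1 hi; omega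
    have hi'' : (2 * (2 * i + 1) : ℝ) < 2 * n + 1 := by exact_mod_cast hi'
    refine mul_pos two_pos (Real.sin_pos_of_pos_of_lt_pi (by positivity) ?_)
    rw [div_lt_iff₀ hd0]
    nlinarith [Real.pi_pos]
  have hneg : ∀ i ∈ Finset.range (n / 2), 0 < -s (n - n / 2 + i) := by
    intro i hi
    have hi1 : 2 * n + 1 < 2 * (2 * (n - n / 2 + i) + 1) := by omega
    have hi2 : (2 * (n - n / 2 + i) + 1) < 2 * n + 1 := by
      have := Finset.mem_range.1 hi; omega
    have hi1' : (2 * n + 1 : ℝ) < 2 * (2 * ((n - n / 2 + i : ℕ) : ℝ) + 1) := by exact_mod_cast hi1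
    have hi2' : (2 * ((n - n / 2 + i : ℕ) : ℝ) + 1) < 2 * n + 1 := by exact_mod_cast hi2
    generalize ((n - n / 2 + i : ℕ)) = j at *
    have : Real.sin (2 * Real.pi * (2 * j + 1) / (2 * n + 1)) < 0 := by
      rw [← Real.sin_sub_two_pi]
      refine Real.sin_neg_of_neg_of_neg_pi_lt ?_ ?_
      · rw [sub_neg, div_lt_iff₀ hd0]
        nlinarith [Real.pi_pos]
      · rw [lt_sub_iff_add_lt, lt_div_iff₀ hd0]
        nlinarith [Real.pi_pos]
    simp only [hs]; linarith
  have hsign : 0 < (-1) ^ (n / 2) * ∏ i ∈ Finset.range n, s i := by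
    have e : ∏ i ∈ Finset.range n, s i = ∏ i ∈ Finset.range (n - n / 2 + n / 2), s i := by
      congr 2; omega
    have e2 : (-1) ^ (n / 2) * ∏ i ∈ Finset.range n, s i
        = (∏ i ∈ Finset.range (n - n / 2), s i)
          * ∏ i ∈ Finset.range (n / 2), -s (n - n / 2 + i) := by
      rw [e, Finset.prod_range_add, Finset.prod_neg, Finset.card_range]; ring
    rw [e2]
    exact mul_pos (Finset.prod_pos hpos) (Finset.prod_pos hneg)
  have hsqrt : Real.sqrt (2 * n + 1 : ℕ) = (-1) ^ (n / 2) * ∏ i ∈ Finset.range n, s i := by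
    rw [← hsq, Real.sqrt_sq_eq_abs, ← abs_of_pos hsign, abs_mul]
    simp
  have heps : Complex.I ^ n = epsd (2 * n + 1) * (-1) ^ (n / 2) := by
    unfold epsd
    obtain ⟨a, rfl | rfl⟩ := Nat.even_or_odd' n
    · rw [if_pos (by omega), pow_mul, Complex.I_sq, one_mul]
      congr 1; omega
    · rw [if_neg (by omega), pow_succ, pow_mul, Complex.I_sq, mul_comm]
      congr 2; omega
  rw [gauss_sum_eq_prod hprim hw0, Finset.prod_congr rfl fun i _ => hfac i,
    Finset.prod_mul_distrib, Finset.prod_const, Finset.card_range, heps, hsqrt]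
  push_cast
  ring

/-! ### Shifts modulo `d` and the total phase -/

/-- A product over one period does not depend on where the period starts. -/
@[to_additive]
lemma prod_range_shift {M : Type*} [CommMonoid M] {f : ℕ → M} {d : ℕ} (hf : ∀ k, f (k + d) = f k)
    (t : ℕ) : ∏ k ∈ Finset.range d, f (k + t) = ∏ k ∈ Finset.range d, f k := by
  induction t with
  | zero => rfl
  | succ t ih =>
    rw [← ih]
    obtain _ | e := d
    · rfl
    rw [Finset.prod_range_succ, Finset.prod_range_succ' (fun k => f (k + t)), zero_add, ← hf t,
      add_comm t (e + 1)]
    congr 1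
    · refine Finset.prod_congr rfl fun k _ => ?_
      rw [add_right_comm, add_assoc]
    · rw [add_right_comm, add_assoc]

/-- Completing the square modulo `d = 2n+1`, where `n + 1` is the inverse of `2`. -/
lemma sum_complete_square {w : ℂ} {n : ℕ} (hw : w ^ (2 * n + 1) = 1) (s : ℕ) :
    w ^ (s * (n + 1) * (s * (n + 1) + 1))
        * ∑ k ∈ Finset.range (2 * n + 1), w ^ (k * (k + 1) + s * k)
      = ∑ k ∈ Finset.range (2 * n + 1), w ^ (k * (k + 1)) := by
  have hper : ∀ k, w ^ ((k + (2 * n + 1)) * (k + (2 * n + 1) + 1)) = w ^ (k * (k + 1)) := by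
    intro k
    rw [show (k + (2 * n + 1)) * (k + (2 * n + 1) + 1)
      = (2 * n + 1) * (2 * k + 2 * n + 2) + k * (k + 1) by ring, pow_add, pow_mul, hw, one_pow,
      one_mul]
  rw [← sum_range_shift (f := fun k => w ^ (k * (k + 1))) hper (s * (n + 1)), Finset.mul_sum]
  refine Finset.sum_congr rfl fun k _ => ?_
  rw [show (k + s * (n + 1)) * (k + s * (n + 1) + 1) = (2 * n + 1) * (s * k)
    + (s * (n + 1) * (s * (n + 1) + 1) + (k * (k + 1) + s * k)) by ring,
    pow_add w ((2 * n + 1) * (s * k)), pow_mul w (2 * n + 1), hw, one_pow, one_mul, ← pow_add]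

/-- The phases accumulated along one period: `E^d = w^S` with `E = exp(πi(d²-1)/(6d))` and
`S = ∑_{l<d} t_l (t_l + 1)`, `t_l = l (n+1)`. Both sides are `exp(2πi n(n+1)/3)`, since
`S / d - n(n+1)/3 = n(n+1)(4n²+5n+3)/3` is an integer. -/
lemma phase_product {w : ℂ} {n : ℕ}
    (hw : w = Complex.exp (2 * Real.pi * Complex.I / (2 * n + 1 : ℕ))) :
    Complex.exp (Real.pi * Complex.I * (((2 * n + 1 : ℕ) : ℂ) ^ 2 - 1) / (6 * (2 * n + 1 : ℕ)))
        ^ (2 * n + 1)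
      = ∏ l ∈ Finset.range (2 * n + 1), w ^ (l * (n + 1) * (l * (n + 1) + 1)) := by
  have hsum : ∀ N : ℕ, 6 * ∑ l ∈ Finset.range N, ((l * (n + 1) * (l * (n + 1) + 1) : ℕ) : ℤ)
      = (n + 1) ^ 2 * ((N - 1) * N * (2 * N - 1)) + 3 * (n + 1) * (N * (N - 1)) := by
    intro N
    induction N with
    | zero => simp
    | succ N ih => rw [Finset.sum_range_succ, mul_add, ih]; push_cast; ring
  obtain ⟨M, hM⟩ : 3 ∣ n * (n + 1) * (4 * n ^ 2 + 5 * n + 3) := by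
    obtain ⟨a, rfl | rfl | rfl⟩ : ∃ a, n = 3 * a ∨ n = 3 * a + 1 ∨ n = 3 * a + 2 :=
      ⟨n / 3, by omega⟩
    · exact ⟨a * (3 * a + 1) * (4 * (3 * a) ^ 2 + 5 * (3 * a) + 3), by ring⟩
    · exact ⟨(3 * a + 1) * (3 * a + 2) * (12 * a ^ 2 + 13 * a + 4), by ring⟩
    · exact ⟨(3 * a + 2) * (a + 1) * (4 * (3 * a + 2) ^ 2 + 5 * (3 * a + 2) + 3), by ring⟩
  rw [Finset.prod_pow_eq_pow_sum]
  have hS := hsum (2 * n + 1)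
  rw [← Nat.cast_sum] at hS
  generalize ∑ l ∈ Finset.range (2 * n + 1), (l * (n + 1) * (l * (n + 1) + 1)) = S at hS ⊢
  have hS' : (3 : ℂ) * S = (2 * n + 1) * (n * (n + 1) + 3 * M) := by
    have h1 : (3 : ℤ) * S = (2 * n + 1) * (n * (n + 1) + 3 * M) := by
      have hM' : (n * (n + 1) * (4 * n ^ 2 + 5 * n + 3) : ℤ) = 3 * M := by exact_mod_cast hM
      push_cast at hS
      linarith [congrArg (fun x : ℤ => (2 * n + 1) * x) hM']
    exact_mod_cast h1
  have hd : (2 * n + 1 : ℂ) ≠ 0 := by exact_mod_cast Nat.succ_ne_zero (2 * n)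
  rw [hw, ← Complex.exp_nat_mul, ← Complex.exp_nat_mul, Complex.exp_eq_exp_iff_exists_int]
  refine ⟨-M, ?_⟩
  push_cast
  field_simp
  linear_combination (-4) * hS'

/-! ### Weighted cyclic shifts -/

/-- Entries of the powers of a weighted cyclic shift. -/
lemma weighted_shift_pow {d : ℕ} (hd : 0 < d) {A : Matrix (Fin d) (Fin d) ℂ} {c : ℕ → ℂ}
    (hc : ∀ m, c (m % d) = c m)
    (hA : ∀ i m : Fin d, A i m = if (i : ℕ) = ((m : ℕ) + 1) % d then c m else 0) (k : ℕ) :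
    ∀ i m : Fin d, (A ^ k) i m
      = if (i : ℕ) = ((m : ℕ) + k) % d then ∏ l ∈ Finset.range k, c (m + l) else 0 := by
  induction k with
  | zero =>
    intro i m
    simp [Matrix.one_apply, Nat.mod_eq_of_lt m.2, Fin.ext_iff]
  | succ k ih =>
    intro i m
    rw [pow_succ', Matrix.mul_apply,
      Finset.sum_eq_single (⟨(m + k) % d, Nat.mod_lt _ hd⟩ : Fin d)]
    · rw [ih, hA, if_pos rfl, Finset.prod_range_succ]
      simp only [Nat.mod_add_mod, hc, add_assoc]
      split_ifs
      · ring
      · ring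
    · intro b _ hb
      rw [ih, if_neg, mul_zero]
      exact fun h => hb (Fin.ext h)
    · simp

lemma weighted_shift_unitary {d : ℕ} (hd : 0 < d) {A : Matrix (Fin d) (Fin d) ℂ} {c : ℕ → ℂ}
    (hn : ∀ m, ‖c m‖ = 1)
    (hA : ∀ i m : Fin d, A i m = if (i : ℕ) = ((m : ℕ) + 1) % d then c m else 0) :
    A ∈ Matrix.unitaryGroup (Fin d) ℂ := by
  rw [Matrix.mem_unitaryGroup_iff']
  ext i m
  rw [Matrix.mul_apply, Finset.sum_eq_single (⟨(m + 1) % d, Nat.mod_lt _ hd⟩ : Fin d)]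
  · rw [Matrix.star_apply, hA, hA, if_pos rfl, Matrix.one_apply]
    by_cases h : i = m
    · subst h
      rw [if_pos rfl, if_pos rfl, Complex.star_def, ← Complex.normSq_eq_conj_mul_self,
        Complex.normSq_eq_norm_sq, hn]
      simp
    · rw [if_neg h, if_neg, star_zero, zero_mul]
      intro h'
      exact h (Fin.ext (Nat.ModEq.eq_of_lt_of_lt
        (Nat.ModEq.add_right_cancel' 1 (show (i : ℕ) + 1 ≡ m + 1 [MOD d] from h'.symm)) i.2 m.2))
  · intro b _ hb
    rw [hA b m, if_neg, mul_zero]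
    exact fun h => hb (Fin.ext h)
  · simp

/-! ### The operators `C_j` -/

/-- with the phase `λ₁ = ε_d^{-1} exp(πi(d²−1)/(6d))`, the
operators `C_j = (λ₁/√d) ∑_k ω^{jk} B_k` built from `B_k = ω^{k(k+1)} X Z^k`
are unitary and satisfy `C_j^d = 𝟙`. -/
theorem Cj_unitary_with_correct_spectrum
    (d : ℕ) (hd : d.Prime) (hd3 : 3 ≤ d)
    (ω : ℂ) (hω : ω = Complex.exp (2 * Real.pi * Complex.I / d))
    (lam1 : ℂ)
    (hlam1 : lam1 = (epsd d)⁻¹ *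
      Complex.exp (Real.pi * Complex.I * ((d : ℂ) ^ 2 - 1) / (6 * d)))
    (B : Fin d → Matrix (Fin d) (Fin d) ℂ)
    (hB : ∀ k : Fin d,
      B k = ω ^ ((k : ℕ) * ((k : ℕ) + 1)) • (Xmat d * (Zmat d ω) ^ (k : ℕ)))
    (C : Fin d → Matrix (Fin d) (Fin d) ℂ)
    (hC : ∀ j : Fin d, C j = (lam1 / (Real.sqrt d : ℂ)) •
      ∑ k : Fin d, ω ^ ((j : ℕ) * (k : ℕ)) • B k) :
    ∀ j : Fin d, C j ∈ Matrix.unitaryGroup (Fin d) ℂ ∧ (C j) ^ d = 1 := by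
  intro j
  obtain ⟨n, rfl⟩ : ∃ n, d = 2 * n + 1 := (hd.odd_of_ne_two (by omega))
  have hdpos : 0 < 2 * n + 1 := by omega
  have hwd : ω ^ (2 * n + 1) = 1 :=
    hω ▸ (Complex.isPrimitiveRoot_exp (2 * n + 1) (by omega)).pow_eq_one
  have hω0 : ω ≠ 0 := hω ▸ Complex.exp_ne_zero _
  have hωn : ‖ω‖ = 1 := Complex.norm_eq_one_of_pow_eq_one hwd (by omega)
  have heps : epsd (2 * n + 1) ≠ 0 := by
    unfold epsd; split_ifs <;> simp
  have hsq : (Real.sqrt (2 * n + 1 : ℕ) : ℂ) ≠ 0 := by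
    exact_mod_cast (Real.sqrt_pos.2 (by positivity)).ne'
  set E : ℂ := Complex.exp
    (Real.pi * Complex.I * (((2 * n + 1 : ℕ) : ℂ) ^ 2 - 1) / (6 * (2 * n + 1 : ℕ))) with hE
  have hEn : ‖E‖ = 1 := by
    rw [hE, show (Real.pi * Complex.I * (((2 * n + 1 : ℕ) : ℂ) ^ 2 - 1) / (6 * (2 * n + 1 : ℕ)))
      = ((Real.pi * (((2 * n + 1 : ℕ) : ℝ) ^ 2 - 1) / (6 * (2 * n + 1 : ℕ)) : ℝ) : ℂ) * Complex.I by
        push_cast; ring]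
    exact Complex.norm_exp_ofReal_mul_I _
  -- `G x = ω^(t(t+1))` with `t = x/2` modulo `d`; up to the constant phase `E ω^(-n²)`, column `m`
  -- of `C j` has the single entry `(G (j+m))⁻¹`.
  set G : ℕ → ℂ := fun x => ω ^ (x * (n + 1) * (x * (n + 1) + 1)) with hG
  have hG0 : ∀ x, G x ≠ 0 := fun x => pow_ne_zero _ hω0
  have hGper : ∀ x, G (x + (2 * n + 1)) = G x := by
    intro x
    simp only [hG]
    rw [show (x + (2 * n + 1)) * (n + 1) * ((x + (2 * n + 1)) * (n + 1) + 1)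
      = (2 * n + 1) * ((n + 1) * (2 * x * (n + 1) + (2 * n + 1) * (n + 1) + 1))
        + x * (n + 1) * (x * (n + 1) + 1) by ring, pow_add, pow_mul, hwd, one_pow, one_mul]
  set c : ℕ → ℂ := fun m => E * (ω ^ (n ^ 2))⁻¹ * (G (m + j))⁻¹ with hc
  have hcper : Function.Periodic c (2 * n + 1) := by
    intro m
    simp only [hc]
    rw [add_right_comm, hGper]
  have hCent : ∀ i m, C j i m = if (i : ℕ) = ((m : ℕ) + 1) % (2 * n + 1) then c m else 0 := by
    intro i m
    have hXZ : ∀ k : ℕ, (Xmat (2 * n + 1) * Zmat (2 * n + 1) ω ^ k) i m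
        = if (i : ℕ) = ((m : ℕ) + 1) % (2 * n + 1) then ω ^ ((m : ℕ) * k) else 0 := by
      intro k
      rw [Zmat, Matrix.diagonal_pow, Matrix.mul_diagonal, Xmat, Matrix.of_apply, ite_mul]
      simp [pow_mul]
    rw [hC, Matrix.smul_apply, Matrix.sum_apply]
    simp only [hB, Matrix.smul_apply, hXZ, smul_eq_mul]
    split_ifs
    · have h1 : ∑ k : Fin (2 * n + 1), ω ^ ((j : ℕ) * (k : ℕ))
          * (ω ^ ((k : ℕ) * ((k : ℕ) + 1)) * ω ^ ((m : ℕ) * (k : ℕ)))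
          = ∑ k ∈ Finset.range (2 * n + 1), ω ^ (k * (k + 1) + ((m : ℕ) + j) * k) := by
        rw [Finset.sum_range]
        refine Finset.sum_congr rfl fun k _ => ?_
        rw [← pow_add, ← pow_add]; congr 1; ring
      have h2 := gauss_sum_eval hω
      rw [← sum_complete_square hwd ((m : ℕ) + j)] at h2
      change ω ^ n ^ 2 * (G (m + j) * _) = _ at h2
      rw [h1, hlam1]
      have h3 := hG0 (m + j)
      have h4 : ω ^ (n ^ 2) ≠ 0 := pow_ne_zero _ hω0
      generalize ∑ k ∈ Finset.range (2 * n + 1), ω ^ (k * (k + 1) + ((m : ℕ) + j) * k) = T at h2 ⊢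
      simp only [hc]
      field_simp
      linear_combination E * h2
    · simp
  refine ⟨weighted_shift_unitary hdpos (c := c) ?_ hCent, ?_⟩
  · intro m
    simp [hc, hG, hEn, hωn]
  · ext i m
    rw [weighted_shift_pow hdpos hcper.map_mod_nat hCent, Nat.add_mod_right,
      Nat.mod_eq_of_lt m.2, Matrix.one_apply]
    have hprod : ∏ l ∈ Finset.range (2 * n + 1), c (m + l) = 1 := by
      simp only [add_comm (m : ℕ)]
      rw [prod_range_shift hcper]
      simp only [hc]
      rw [Finset.prod_mul_distrib, Finset.prod_const, Finset.card_range, mul_pow, inv_pow,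
        ← pow_mul, mul_comm (n ^ 2), pow_mul, hwd, one_pow, inv_one, mul_one,
        Finset.prod_inv_distrib, prod_range_shift hGper, hE, phase_product hω]
      exact mul_inv_cancel₀ (Finset.prod_ne_zero_iff.2 fun x _ => hG0 x)
    rw [hprod]
    simp only [Fin.ext_iff]

end
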